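/- Set g = √(2/3), c = √(1/6), f = √(1/2), a = √(1/24), b = √(1/8), e = √(1/8), h = √(3/8), i = √(1/2), and weights W₀ = π³/240, W₁ = π³/480, W₂ = π³/1440. Consider the 127 nodes in ℝ⁶: the origin with weight W₀; with weight W₁ the 54 points: (±g,0,0,0,0,0) [2 points], the points with first coordinate ±c and ±f in exactly one of the other five coordinates (zeros elsewhere) [20 points], and ±v for each v of the form (a, w) where w is a coordinate permutation of (b,b,b,b,b) [2 points], of (b,b,b,−b,−b) [20 points], or of (b,−b,−b,−b,−b) [10 points] over the last five coordinates; with weight W₂ the 72 points: ±v for each v of the form (h, w) where w is a coordinate permutation of (e,e,e,e,−e) [10 points], of (e,e,−e,−e,−e) [20 points], or equals (−e,−e,−e,−e,−e) [2 points], together with the 40 points with first coordinate 0 having ±i in exactly two of the last five coordinates (signs independent) and zeros elsewhere. Then Σ W_i p(x_i) = ∫_{‖x‖≤1} p(x) dx for every real polynomial p in 6 variables of total degree at most 7. -/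

import Mathlib

open MeasureTheory

/-!
Both sides are linear in the polynomial, so it suffices to treat monomials `x ^ α` with `|α| ≤ 7`.

*The integral.* Writing `exp (-‖x‖²) = ∫ t ≥ ‖x‖², exp (-t)` and exchanging the integrals, the
Gaussian moment `∫ x ^ α exp (-‖x‖²)` over `ℝ⁶` becomes
`∫ t > 0, exp (-t) ∫_{‖x‖² ≤ t} x ^ α = Γ((6 + |α|) / 2 + 1) ∫_{‖x‖ ≤ 1} x ^ α`, because the inner
integral is homogeneous of degree `(6 + |α|) / 2` in `t`. The Gaussian moment is a product of
one-dimensional ones, whence `ball_moment`.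

*The nodes.* With `s = √(1/24)` and `r = √(1/8)`, every node has the form
`(s z₀, r z₁, …, r z₅)` with integers `zⱼ`, so the rule applied to `x ^ α` is
`s ^ α₀ r ^ (α₁ + ⋯ + α₅) π³ / 1440` times an integer (`rule_monomial`). That integer vanishes for
odd `|α|` by central symmetry; for even `|α|` it has a closed form in powers of `±1, ±2, 3, 4`
(`two_mul_halfSum`), and its agreement with the ball moment is a finite check over the exponents
(`node_moments`).
-/

/-! ### Moments of the unit ball -/

/-- `(k - 1)‼` for even `k` (with value `1` at `k = 0`) and `0` for odd `k`: the integer factor of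
the `k`-th Gaussian moment. -/
def dfac (k : ℕ) : ℤ := if k % 2 = 0 then (k - 1).doubleFactorial else 0

lemma integrable_pow_mul_exp_neg_sq (k : ℕ) :
    Integrable fun x : ℝ => x ^ k * Real.exp (-x ^ 2) := by
  have := integrable_rpow_mul_exp_neg_mul_sq (b := 1) one_pos (s := k)
    (by have : (0 : ℝ) ≤ k := k.cast_nonneg
        linarith)
  simpa using this

/-- The value of the one-dimensional Gaussian moment `∫ x ^ k exp (-x²)`. -/
noncomputable def gaussMoment (k : ℕ) : ℝ :=
  dfac k * √Real.pi / 2 ^ (k / 2)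

lemma integral_pow_mul_exp_neg_sq (k : ℕ) :
    ∫ x : ℝ, x ^ k * Real.exp (-x ^ 2) = gaussMoment k := by
  unfold gaussMoment dfac
  split_ifs with hk
  · obtain ⟨j, rfl⟩ := Nat.even_iff.mpr hk
    have h1 : ∀ x : ℝ, x ^ (j + j) * Real.exp (-x ^ 2)
        = (fun y : ℝ => y ^ (j + j) * Real.exp (-y ^ 2)) |x| := by
      intro x
      simp only [sq_abs, ((Even.add_self j).pow_abs x)]
    rw [integral_congr_ae (.of_forall h1),
      integral_comp_abs (f := fun y : ℝ => y ^ (j + j) * Real.exp (-y ^ 2))]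
    have h2 := integral_rpow_mul_exp_neg_rpow (p := 2) (q := ((j + j : ℕ) : ℝ)) two_pos
      (by have : (0 : ℝ) ≤ ((j + j : ℕ) : ℝ) := Nat.cast_nonneg _
          linarith)
    simp only [Real.rpow_natCast, Real.rpow_ofNat] at h2
    rw [h2]
    have h3 : (((j + j : ℕ) : ℝ) + 1) / 2 = j + 1 / 2 := by push_cast; ring
    rw [h3, Real.Gamma_nat_add_half]
    have h4 : (j + j) / 2 = j := by omega
    rw [h4, ← two_mul]
    push_cast
    ring
  · have hk' : Odd k := Nat.odd_iff.mpr (by omega)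
    have h1 := integral_neg_eq_self (fun x : ℝ => x ^ k * Real.exp (-x ^ 2)) volume
    simp only [hk'.neg_pow, neg_sq, neg_mul, integral_neg] at h1
    rw [Int.cast_zero, zero_mul, zero_div]
    linarith

open scoped Pointwise in
/-- Dilating by `√t` maps the unit ball onto the ball of squared radius `t`. -/
lemma setIntegral_ball_scale (α : Fin 6 → ℕ) {t : ℝ} (ht : 0 < t) :
    ∫ x in {y : Fin 6 → ℝ | ∑ j, y j ^ 2 ≤ t}, ∏ j, x j ^ α j
      = t ^ (((6 + ∑ j, α j : ℕ) : ℝ) / 2)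
        * ∫ x in {y : Fin 6 → ℝ | ∑ j, y j ^ 2 ≤ 1}, ∏ j, x j ^ α j := by
  have hs : 0 < √t := Real.sqrt_pos.mpr ht
  have h1 := Measure.setIntegral_comp_smul_of_pos (μ := volume)
    (fun x : Fin 6 → ℝ => ∏ j, x j ^ α j) {y : Fin 6 → ℝ | ∑ j, y j ^ 2 ≤ 1} hs
  have hset : √t • {y : Fin 6 → ℝ | ∑ j, y j ^ 2 ≤ 1} = {y : Fin 6 → ℝ | ∑ j, y j ^ 2 ≤ t} := by
    ext y
    rw [Set.mem_smul_set_iff_inv_smul_mem₀ hs.ne']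
    simp only [Set.mem_ofPred_eq, Pi.smul_apply, smul_eq_mul, mul_pow, inv_pow,
      Real.sq_sqrt ht.le, ← Finset.mul_sum]
    rw [inv_mul_le_iff₀ ht, mul_one]
  rw [hset] at h1
  simp only [Pi.smul_apply, smul_eq_mul, mul_pow, Finset.prod_mul_distrib,
    integral_const_mul, Finset.prod_pow_eq_pow_sum, Module.finrank_fintype_fun_eq_card,
    Fintype.card_fin] at h1
  have h2 : t ^ (((6 + ∑ j, α j : ℕ) : ℝ) / 2) = √t ^ 6 * √t ^ (∑ j, α j) := by
    rw [← pow_add, Real.sqrt_eq_rpow, ← Real.rpow_natCast, ← Real.rpow_mul ht.le]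
    congr 1; ring
  rw [h2, mul_assoc, h1]
  field_simp

/-- The monomial moments of the unit ball, obtained by computing the Gaussian moment
`∫ x ^ α exp (-‖x‖²)` both coordinatewise and as a superposition of balls of squared radius `t`. -/
lemma ball_moment (α : Fin 6 → ℕ) :
    Real.Gamma (((6 + ∑ j, α j : ℕ) : ℝ) / 2 + 1)
        * ∫ x in {y : Fin 6 → ℝ | ∑ j, y j ^ 2 ≤ 1}, ∏ j, x j ^ α j
      = ∏ j, gaussMoment (α j) := by
  set I := ∫ x in {y : Fin 6 → ℝ | ∑ j, y j ^ 2 ≤ 1}, ∏ j, x j ^ α j with hI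
  have hprod : ∀ x : Fin 6 → ℝ, (∏ j, x j ^ α j) * Real.exp (-∑ j, x j ^ 2)
      = ∏ j, (x j ^ α j * Real.exp (-x j ^ 2)) := by
    intro x
    rw [Finset.prod_mul_distrib, ← Real.exp_sum, Finset.sum_neg_distrib]
  have hG : ∫ x : Fin 6 → ℝ, (∏ j, x j ^ α j) * Real.exp (-∑ j, x j ^ 2)
      = ∏ j, gaussMoment (α j) := by
    simp_rw [hprod]
    rw [integral_fintype_prod_volume_eq_prod (fun j (y : ℝ) => y ^ α j * Real.exp (-y ^ 2))]
    simp_rw [integral_pow_mul_exp_neg_sq]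
  have hGi : Integrable fun x : Fin 6 → ℝ =>
      (∏ j, x j ^ α j) * Real.exp (-∑ j, x j ^ 2) := by
    simp_rw [hprod]
    exact Integrable.fintype_prod (f := fun j (y : ℝ) => y ^ α j * Real.exp (-y ^ 2))
      (μ := fun _ => volume) fun j => integrable_pow_mul_exp_neg_sq (α j)
  -- Integrating `F` over `t` first yields the Gaussian integrand; over `x` first, the moments of
  -- the balls.
  let F : (Fin 6 → ℝ) → ℝ → ℝ := fun x =>
    (Set.Ici (∑ j, x j ^ 2)).indicator fun t => (∏ j, x j ^ α j) * Real.exp (-t)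
  have hFt : ∀ x, ∫ t, F x t = (∏ j, x j ^ α j) * Real.exp (-∑ j, x j ^ 2) := by
    intro x
    rw [integral_indicator measurableSet_Ici, integral_Ici_eq_integral_Ioi, integral_const_mul,
      integral_exp_neg_Ioi]
  have hFx : ∀ t, ∫ x, F x t = Real.exp (-t) *
      ∫ x in {y : Fin 6 → ℝ | ∑ j, y j ^ 2 ≤ t}, ∏ j, x j ^ α j := by
    intro t
    have hm : MeasurableSet {y : Fin 6 → ℝ | ∑ j, y j ^ 2 ≤ t} :=
      measurableSet_le (by fun_prop) measurable_const
    rw [← integral_const_mul, ← integral_indicator hm]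
    congr 1
    ext x
    simp only [F, Set.indicator, Set.mem_Ici, Set.mem_ofPred_eq]
    split_ifs <;> ring
  have hFint : Integrable (Function.uncurry F) (volume.prod volume) := by
    have hmeas : Measurable (Function.uncurry F) := by
      have : Function.uncurry F = Set.indicator {z : (Fin 6 → ℝ) × ℝ | ∑ j, z.1 j ^ 2 ≤ z.2}
          (fun z => (∏ j, z.1 j ^ α j) * Real.exp (-z.2)) := by
        ext ⟨x, t⟩
        simp [F, Set.indicator]
      rw [this]
      exact Measurable.indicator (by fun_prop) (measurableSet_le (by fun_prop) (by fun_prop))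
    rw [integrable_prod_iff hmeas.aestronglyMeasurable]
    constructor
    · refine Filter.Eventually.of_forall fun x => ?_
      change Integrable (F x)
      refine IntegrableOn.integrable_indicator ?_ measurableSet_Ici
      rw [integrableOn_Ici_iff_integrableOn_Ioi]
      exact (integrableOn_exp_neg_Ioi _).const_mul _
    · refine hGi.norm.congr (Filter.Eventually.of_forall fun x => ?_)
      simp only [Function.uncurry, F, norm_indicator_eq_indicator_norm]
      rw [integral_indicator measurableSet_Ici, integral_Ici_eq_integral_Ioi]
      simp only [norm_mul, Real.norm_eq_abs, Real.abs_exp]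
      rw [integral_const_mul, integral_exp_neg_Ioi]
  have hswap := integral_integral_swap hFint
  simp_rw [hFt, hFx] at hswap
  rw [hG] at hswap
  rw [hswap, ← setIntegral_eq_integral_of_forall_compl_eq_zero (s := Set.Ici 0)]
  · rw [integral_Ici_eq_integral_Ioi, Real.Gamma_eq_integral (by positivity),
      ← integral_mul_const]
    refine setIntegral_congr_fun measurableSet_Ioi fun t ht => ?_
    simp only [setIntegral_ball_scale α ht, add_sub_cancel_right, ← hI]
    ring
  · intro t ht
    have : {y : Fin 6 → ℝ | ∑ j, y j ^ 2 ≤ t} = ∅ := by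
      ext y
      have : 0 ≤ ∑ j, y j ^ 2 := by positivity
      simp only [Set.mem_Ici, not_le] at ht
      simp; linarith
    simp [this]

/-! ### The integer node sums -/

/-- One node from each antipodal pair of nonzero nodes, stored as `(w, z₀, …, z₅)`: the node is
`(s z₀, r z₁, …, r z₅)` with `s = √(1/24)`, `r = √(1/8)`, and its weight is `w π³ / 1440`.
The sign patterns `(p, q, u, v, ±pquv)` enumerate the vectors in `{1, -1}⁵` with an even,
respectively odd, number of minus signs. -/
def halfNodes : List (ℤ × ℤ × ℤ × ℤ × ℤ × ℤ × ℤ) :=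
  [(3, 4, 0, 0, 0, 0, 0)]
  ++ ([2, -2].flatMap fun t =>
    [(3, 2, t, 0, 0, 0, 0), (3, 2, 0, t, 0, 0, 0), (3, 2, 0, 0, t, 0, 0),
     (3, 2, 0, 0, 0, t, 0), (3, 2, 0, 0, 0, 0, t)])
  ++ ([1, -1].flatMap fun p => [1, -1].flatMap fun q => [1, -1].flatMap fun u =>
      [1, -1].flatMap fun v =>
      [(3, 1, p, q, u, v, p * q * u * v), (1, 3, p, q, u, v, -(p * q * u * v))])
  ++ ([2, -2].flatMap fun t =>
    [(1, 0, 2, t, 0, 0, 0), (1, 0, 2, 0, t, 0, 0), (1, 0, 2, 0, 0, t, 0), (1, 0, 2, 0, 0, 0, t),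
     (1, 0, 0, 2, t, 0, 0), (1, 0, 0, 2, 0, t, 0), (1, 0, 0, 2, 0, 0, t),
     (1, 0, 0, 0, 2, t, 0), (1, 0, 0, 0, 2, 0, t), (1, 0, 0, 0, 0, 2, t)])

/-- The weighted sum of the monomial with exponents `a, …, f` over the integer vectors of
`halfNodes`. -/
def halfSum (a b c d e f : ℕ) : ℤ :=
  (halfNodes.map fun (w, p, q, r, s, t, u) =>
    w * (p ^ a * q ^ b * r ^ c * s ^ d * t ^ e * u ^ f)).sum

/-- The sum of `x ^ k` over `x = ±2`. -/
def evenSum (k : ℕ) : ℤ := 2 ^ k + (-2) ^ k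

/-- A closed form of `2 * halfSum`. A power of `0` encodes that the coordinates vanishing at a node
must have exponent `0`; the last two products come from
`∑ ∏ εⱼ ^ βⱼ = (∏ (1 + (-1) ^ βⱼ) ± ∏ (1 - (-1) ^ βⱼ)) / 2`, the sum being over sign vectors with an
even (`+`) or odd (`-`) number of minus signs. -/
def closedSum (a b c d e f : ℕ) : ℤ :=
  2 * (3 * 4 ^ a * 0 ^ (b + c + d + e + f)
    + 3 * 2 ^ a * (evenSum b * 0 ^ (c + d + e + f) + evenSum c * 0 ^ (b + d + e + f)
      + evenSum d * 0 ^ (b + c + e + f) + evenSum e * 0 ^ (b + c + d + f)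
      + evenSum f * 0 ^ (b + c + d + e))
    + 0 ^ a * (2 ^ b * (evenSum c * 0 ^ (d + e + f) + evenSum d * 0 ^ (c + e + f)
        + evenSum e * 0 ^ (c + d + f) + evenSum f * 0 ^ (c + d + e))
      + 2 ^ c * (evenSum d * 0 ^ (b + e + f) + evenSum e * 0 ^ (b + d + f)
        + evenSum f * 0 ^ (b + d + e))
      + 2 ^ d * (evenSum e * 0 ^ (b + c + f) + evenSum f * 0 ^ (b + c + e))
      + 2 ^ e * evenSum f * 0 ^ (b + c + d)))
    + (3 + 3 ^ a) * ((1 + (-1) ^ b) * (1 + (-1) ^ c) * (1 + (-1) ^ d) * (1 + (-1) ^ e)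
        * (1 + (-1) ^ f))
    + (3 - 3 ^ a) * ((1 - (-1) ^ b) * (1 - (-1) ^ c) * (1 - (-1) ^ d) * (1 - (-1) ^ e)
        * (1 - (-1) ^ f))

set_option maxHeartbeats 1000000 in
lemma two_mul_halfSum (a b c d e f : ℕ) : 2 * halfSum a b c d e f = closedSum a b c d e f := by
  simp only [halfSum, halfNodes, closedSum, evenSum, List.flatMap_cons, List.flatMap_nil,
    List.map_cons, List.map_nil, List.sum_cons, List.sum_nil,
    List.cons_append, List.nil_append, List.append_nil, mul_one, one_mul, mul_neg, neg_neg,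
    one_pow, pow_add]
  ring

set_option maxRecDepth 100000 in
set_option synthInstance.maxHeartbeats 400000 in
set_option synthInstance.maxSize 2000 in
/-- The moment equations of the rule for even total degree at most `6`, cleared of denominators and
square roots; the `6` is the weight of the origin in units of `π³ / 1440`. -/
theorem node_moments : ∀ a < 8, ∀ b < 8 - a, ∀ c < 8 - a - b, ∀ d < 8 - a - b - c,
    ∀ e < 8 - a - b - c - d, ∀ f < 8 - a - b - c - d - e, (a + b + c + d + e + f) % 2 = 0 →
    (6 * 0 ^ (a + b + c + d + e + f) + closedSum a b c d e f)
       * (2 ^ ((a + b + c + d + e + f) / 2) * (3 + (a + b + c + d + e + f) / 2).factorial)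
     = 1440 * 24 ^ (a / 2) * 8 ^ ((b + c + d + e + f) / 2)
       * (dfac a * dfac b * dfac c * dfac d * dfac e * dfac f) := by
  decide +kernel

/-! ### The cubature rule as a linear functional -/

/-- The point of `ℝ⁶` with integer coordinates `z`, the first scaled by `s` and the others by `r`. -/
noncomputable def pt (s r : ℝ) (z : ℤ × ℤ × ℤ × ℤ × ℤ × ℤ) : Fin 6 → ℝ :=
  ![s * z.1, r * z.2.1, r * z.2.2.1, r * z.2.2.2.1, r * z.2.2.2.2.1, r * z.2.2.2.2.2]

/-- The 127-point rule as a linear functional, the nonzero nodes being taken in antipodal pairs. -/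
noncomputable def rule (s r : ℝ) : MvPolynomial (Fin 6) ℝ →ₗ[ℝ] ℝ :=
  (Real.pi ^ 3 / 1440) • ((6 : ℝ) • (MvPolynomial.aeval (0 : Fin 6 → ℝ)).toLinearMap
    + (halfNodes.map fun n => (n.1 : ℝ) • ((MvPolynomial.aeval (pt s r n.2)).toLinearMap
        + (MvPolynomial.aeval (pt s r (-n.2))).toLinearMap)).sum)

lemma linearMap_list_sum_apply (L : List (MvPolynomial (Fin 6) ℝ →ₗ[ℝ] ℝ))
    (q : MvPolynomial (Fin 6) ℝ) : L.sum q = (L.map fun φ => φ q).sum := by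
  induction L with
  | nil => simp
  | cons φ L ih => simp [ih]

lemma rule_apply (s r : ℝ) (q : MvPolynomial (Fin 6) ℝ) :
    rule s r q = Real.pi ^ 3 / 1440 * (6 * MvPolynomial.eval 0 q
      + (halfNodes.map fun n => (n.1 : ℝ) * (MvPolynomial.eval (pt s r n.2) q
        + MvPolynomial.eval (pt s r (-n.2)) q)).sum) := by
  simp only [rule, LinearMap.smul_apply, LinearMap.add_apply, linearMap_list_sum_apply,
    List.map_map, Function.comp_def, AlgHom.toLinearMap_apply, MvPolynomial.aeval_eq_eval,
    smul_eq_mul]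

lemma rule_monomial (s r : ℝ) (m : Fin 6 →₀ ℕ) :
    rule s r (MvPolynomial.monomial m 1) = Real.pi ^ 3 / 1440
      * (s ^ m 0 * r ^ (m 1 + m 2 + m 3 + m 4 + m 5))
      * ((6 * 0 ^ (m 0 + m 1 + m 2 + m 3 + m 4 + m 5)
        + (1 + (-1) ^ (m 0 + m 1 + m 2 + m 3 + m 4 + m 5))
          * halfSum (m 0) (m 1) (m 2) (m 3) (m 4) (m 5) : ℤ) : ℝ) := by
  have hlist : (halfNodes.map fun n => (n.1 : ℝ) *
        (MvPolynomial.eval (pt s r n.2) (MvPolynomial.monomial m 1)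
        + MvPolynomial.eval (pt s r (-n.2)) (MvPolynomial.monomial m 1))).sum
      = s ^ m 0 * r ^ (m 1 + m 2 + m 3 + m 4 + m 5)
        * (1 + (-1) ^ (m 0 + m 1 + m 2 + m 3 + m 4 + m 5))
          * (halfSum (m 0) (m 1) (m 2) (m 3) (m 4) (m 5) : ℝ) := by
    rw [halfSum]
    generalize halfNodes = L
    induction L with
    | nil => simp
    | cons n L ih =>
      obtain ⟨w, z0, z1, z2, z3, z4, z5⟩ := n
      rw [List.map_cons, List.sum_cons, ih, List.map_cons, List.sum_cons]
      have hneg : ∀ (x y : ℝ) (k : ℕ), (x * -y) ^ k = (-1) ^ k * (x ^ k * y ^ k) := by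
        intro x y k
        rw [← mul_pow, ← mul_pow]; ring
      simp only [MvPolynomial.eval_monomial, Finsupp.prod_fintype, pow_zero, implies_true,
        Fin.prod_univ_six, pt, Prod.fst_neg, Prod.snd_neg, Int.cast_neg, Matrix.cons_val,
        hneg, mul_pow]
      push_cast
      ring
  rw [rule_apply, hlist]
  have h0 : MvPolynomial.eval (0 : Fin 6 → ℝ) (MvPolynomial.monomial m 1)
      = s ^ m 0 * r ^ (m 1 + m 2 + m 3 + m 4 + m 5)
        * 0 ^ (m 0 + m 1 + m 2 + m 3 + m 4 + m 5) := by
    simp only [MvPolynomial.eval_monomial, Finsupp.prod_fintype, pow_zero, implies_true,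
      Fin.prod_univ_six, Pi.zero_apply, one_mul, ← pow_add]
    rcases Nat.eq_zero_or_pos (m 0 + m 1 + m 2 + m 3 + m 4 + m 5) with h | h
    · have h' : m 0 = 0 ∧ m 1 + m 2 + m 3 + m 4 + m 5 = 0 := by omega
      rw [h, h'.1, h'.2]; simp
    · rw [zero_pow h.ne', mul_zero]
  rw [h0]
  push_cast
  ring

lemma rule_monomial_eq_integral (s r : ℝ) (hs : s ^ 2 = 1 / 24) (hr : r ^ 2 = 1 / 8)
    (m : Fin 6 →₀ ℕ) (hm : m 0 + m 1 + m 2 + m 3 + m 4 + m 5 ≤ 7) :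
    rule s r (MvPolynomial.monomial m 1)
      = ∫ x in {y : Fin 6 → ℝ | ∑ t, y t ^ 2 ≤ 1}, ∏ j, x j ^ m j := by
  have hI := ball_moment m
  set I := ∫ x in {y : Fin 6 → ℝ | ∑ t, y t ^ 2 ≤ 1}, ∏ j, x j ^ m j
  have hN := node_moments (m 0) (by omega) (m 1) (by omega) (m 2) (by omega) (m 3) (by omega)
    (m 4) (by omega) (m 5) (by omega)
  rw [← two_mul_halfSum] at hN
  rw [rule_monomial]
  simp only [Fin.sum_univ_six, Fin.prod_univ_six, gaussMoment] at hI
  generalize halfSum (m 0) (m 1) (m 2) (m 3) (m 4) (m 5) = Z at *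
  generalize m 0 = a at *
  generalize m 1 = b at *
  generalize m 2 = c at *
  generalize m 3 = d at *
  generalize m 4 = e at *
  generalize m 5 = f at *
  have hΓ : Real.Gamma (((6 + (a + b + c + d + e + f) : ℕ) : ℝ) / 2 + 1) ≠ 0 :=
    (Real.Gamma_pos_of_pos (by positivity)).ne'
  by_cases hall : a % 2 = 0 ∧ b % 2 = 0 ∧ c % 2 = 0 ∧ d % 2 = 0 ∧ e % 2 = 0 ∧ f % 2 = 0
  · obtain ⟨⟨a, rfl⟩, ⟨b, rfl⟩, ⟨c, rfl⟩, ⟨d, rfl⟩, ⟨e, rfl⟩, ⟨f, rfl⟩⟩ :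
        2 ∣ a ∧ 2 ∣ b ∧ 2 ∣ c ∧ 2 ∣ d ∧ 2 ∣ e ∧ 2 ∣ f := by
      simpa only [Nat.dvd_iff_mod_eq_zero] using hall
    simp only [← mul_add, Nat.mul_div_cancel_left _ two_pos] at hN hI ⊢
    have hN' := congrArg (Int.cast (R := ℝ)) (hN (by omega))
    have hG : (((6 + 2 * (a + b + c + d + e + f) : ℕ) : ℝ) / 2 + 1)
        = ((3 + (a + b + c + d + e + f) : ℕ) : ℝ) + 1 := by
      push_cast; ring
    rw [hG, Real.Gamma_nat_eq_factorial] at hI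
    have hF : ((3 + (a + b + c + d + e + f)).factorial : ℝ) ≠ 0 := by positivity
    have hπ : √Real.pi ^ 6 = Real.pi ^ 3 := by
      rw [show 6 = 2 * 3 from rfl, pow_mul, Real.sq_sqrt Real.pi_pos.le]
    rw [pow_mul s, pow_mul r, hs, hr]
    have h1 : (-1 : ℤ) ^ (2 * (a + b + c + d + e + f)) = 1 := by simp
    rw [h1, one_add_one_eq_two]
    push_cast at hN' ⊢
    set S : ℝ := 6 * 0 ^ (2 * (a + b + c + d + e + f)) + 2 * (Z : ℝ)
    set D : ℝ := (dfac (2 * a) : ℝ) * dfac (2 * b) * dfac (2 * c) * dfac (2 * d) * dfac (2 * e)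
      * dfac (2 * f)
    have hI' : ((3 + (a + b + c + d + e + f)).factorial : ℝ) * I * 2 ^ (a + b + c + d + e + f)
        = D * Real.pi ^ 3 := by
      rw [hI, ← hπ]
      simp only [D, pow_add]
      field_simp
    have h2 : ((2 : ℝ) ^ (a + b + c + d + e + f)) ≠ 0 := by positivity
    have h24 : ((1 / 24 : ℝ) ^ a) * 24 ^ a = 1 := by rw [← mul_pow]; norm_num
    have h8 : ((1 / 8 : ℝ) ^ (b + c + d + e + f)) * 8 ^ (b + c + d + e + f) = 1 := by
      rw [← mul_pow]; norm_num
    apply mul_right_cancel₀ (mul_ne_zero h2 hF)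
    calc _ = Real.pi ^ 3 / 1440 * ((1 / 24) ^ a * (1 / 8) ^ (b + c + d + e + f))
          * (S * (2 ^ (a + b + c + d + e + f) * (3 + (a + b + c + d + e + f)).factorial)) := by
            ring
      _ = Real.pi ^ 3 * ((1 / 24) ^ a * 24 ^ a) *
          ((1 / 8) ^ (b + c + d + e + f) * 8 ^ (b + c + d + e + f)) * D := by
            rw [hN']; ring
      _ = D * Real.pi ^ 3 := by rw [h24, h8]; ring
      _ = _ := by rw [← hI']; ring
  -- With an odd exponent present, the integral and the node sum both vanish.
  · have hD : dfac a * dfac b * dfac c * dfac d * dfac e * dfac f = 0 := by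
      simp only [mul_eq_zero, dfac]
      by_contra hcon
      simp only [not_or] at hcon
      apply hall
      refine ⟨?_, ?_, ?_, ?_, ?_, ?_⟩ <;> by_contra hk <;> simp [hk] at hcon
    have hD' : (dfac a : ℝ) * dfac b * dfac c * dfac d * dfac e * dfac f = 0 := by
      exact_mod_cast congrArg (Int.cast (R := ℝ)) hD
    have hI0 : I = 0 := by
      refine (mul_eq_zero.mp (hI.trans ?_)).resolve_left hΓ
      have : ∀ p A B C D E F a b c d e f : ℝ, A * p / a * (B * p / b) * (C * p / c) * (D * p / d)
          * (E * p / e) * (F * p / f)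
          = (A * B * C * D * E * F) * (p ^ 6 / a / b / c / d / e / f) := by
        intros; ring
      rw [this, hD', zero_mul]
    have hZ : 6 * 0 ^ (a + b + c + d + e + f) + (1 + (-1) ^ (a + b + c + d + e + f)) * Z = 0 := by
      rcases Nat.mod_two_eq_zero_or_one (a + b + c + d + e + f) with h | h
      · have := hN h
        rw [hD, mul_zero] at this
        rw [(Nat.even_iff.mpr h).neg_one_pow, one_add_one_eq_two]
        exact (mul_eq_zero.mp this).resolve_right (by positivity)
      · rw [(Nat.odd_iff.mpr h).neg_one_pow, zero_pow (by omega)]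
        ring
    rw [hZ, hI0]
    simp

lemma rule_eq_integral (s r : ℝ) (hs : s ^ 2 = 1 / 24) (hr : r ^ 2 = 1 / 8)
    (q : MvPolynomial (Fin 6) ℝ) (hq : q.totalDegree ≤ 7) :
    rule s r q = ∫ x in {y : Fin 6 → ℝ | ∑ t, y t ^ 2 ≤ 1}, MvPolynomial.eval x q := by
  have hcompact : IsCompact {y : Fin 6 → ℝ | ∑ t, y t ^ 2 ≤ 1} := by
    refine Metric.isCompact_of_isClosed_isBounded
      (isClosed_le (by fun_prop) continuous_const) ?_
    refine (Metric.isBounded_closedBall (x := (0 : Fin 6 → ℝ)) (r := 1)).subset fun y hy => ?_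
    rw [mem_closedBall_zero_iff, pi_norm_le_iff_of_nonneg zero_le_one]
    intro j
    have h1 : y j ^ 2 ≤ ∑ t, y t ^ 2 :=
      Finset.single_le_sum (f := fun t => y t ^ 2) (fun t _ => sq_nonneg _) (Finset.mem_univ j)
    exact abs_le_one_iff_mul_self_le_one.mpr (by rw [← sq]; exact h1.trans hy)
  simp_rw [MvPolynomial.eval_eq' _ q]
  rw [integral_finsetSum]
  · conv_lhs => rw [q.as_sum, map_sum]
    refine Finset.sum_congr rfl fun m hm => ?_
    rw [integral_const_mul, ← rule_monomial_eq_integral s r hs hr m, ← smul_eq_mul, ← map_smul,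
      MvPolynomial.smul_monomial, smul_eq_mul, mul_one]
    have h := MvPolynomial.le_totalDegree hm
    rw [Finsupp.sum_fintype _ _ (by simp), Fin.sum_univ_six] at h
    omega
  · intro m _
    exact ContinuousOn.integrableOn_compact hcompact (by fun_prop)

/-- 127 point rule of degree 7 for `S_6`. -/
theorem stmt_18 (a b c e f g h i W0 W1 W2 : ℝ)
    (hg : g = Real.sqrt (2 / 3))
    (hc : c = Real.sqrt (1 / 6))
    (hf : f = Real.sqrt (1 / 2))
    (ha : a = Real.sqrt (1 / 24))
    (hb : b = Real.sqrt (1 / 8))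
    (he : e = Real.sqrt (1 / 8))
    (hh : h = Real.sqrt (3 / 8))
    (hi : i = Real.sqrt (1 / 2))
    (hW0 : W0 = Real.pi ^ 3 / 240)
    (hW1 : W1 = Real.pi ^ 3 / 480)
    (hW2 : W2 = Real.pi ^ 3 / 1440)
    :
    ∀ q : MvPolynomial (Fin 6) ℝ, q.totalDegree ≤ 7 →
      W0 * (MvPolynomial.eval ![0, 0, 0, 0, 0, 0] q)
        + W1 * (MvPolynomial.eval ![g, 0, 0, 0, 0, 0] q
          + MvPolynomial.eval ![-g, 0, 0, 0, 0, 0] q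
          + MvPolynomial.eval ![c, f, 0, 0, 0, 0] q
          + MvPolynomial.eval ![c, -f, 0, 0, 0, 0] q
          + MvPolynomial.eval ![c, 0, f, 0, 0, 0] q
          + MvPolynomial.eval ![c, 0, -f, 0, 0, 0] q
          + MvPolynomial.eval ![c, 0, 0, f, 0, 0] q
          + MvPolynomial.eval ![c, 0, 0, -f, 0, 0] q
          + MvPolynomial.eval ![c, 0, 0, 0, f, 0] q
          + MvPolynomial.eval ![c, 0, 0, 0, -f, 0] q
          + MvPolynomial.eval ![c, 0, 0, 0, 0, f] q
          + MvPolynomial.eval ![c, 0, 0, 0, 0, -f] q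
          + MvPolynomial.eval ![-c, f, 0, 0, 0, 0] q
          + MvPolynomial.eval ![-c, -f, 0, 0, 0, 0] q
          + MvPolynomial.eval ![-c, 0, f, 0, 0, 0] q
          + MvPolynomial.eval ![-c, 0, -f, 0, 0, 0] q
          + MvPolynomial.eval ![-c, 0, 0, f, 0, 0] q
          + MvPolynomial.eval ![-c, 0, 0, -f, 0, 0] q
          + MvPolynomial.eval ![-c, 0, 0, 0, f, 0] q
          + MvPolynomial.eval ![-c, 0, 0, 0, -f, 0] q
          + MvPolynomial.eval ![-c, 0, 0, 0, 0, f] q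
          + MvPolynomial.eval ![-c, 0, 0, 0, 0, -f] q
          + MvPolynomial.eval ![a, b, b, b, b, b] q
          + MvPolynomial.eval ![-a, -b, -b, -b, -b, -b] q
          + MvPolynomial.eval ![a, -b, -b, b, b, b] q
          + MvPolynomial.eval ![-a, b, b, -b, -b, -b] q
          + MvPolynomial.eval ![a, -b, b, -b, b, b] q
          + MvPolynomial.eval ![-a, b, -b, b, -b, -b] q
          + MvPolynomial.eval ![a, -b, b, b, -b, b] q
          + MvPolynomial.eval ![-a, b, -b, -b, b, -b] q
          + MvPolynomial.eval ![a, -b, b, b, b, -b] q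
          + MvPolynomial.eval ![-a, b, -b, -b, -b, b] q
          + MvPolynomial.eval ![a, b, -b, -b, b, b] q
          + MvPolynomial.eval ![-a, -b, b, b, -b, -b] q
          + MvPolynomial.eval ![a, b, -b, b, -b, b] q
          + MvPolynomial.eval ![-a, -b, b, -b, b, -b] q
          + MvPolynomial.eval ![a, b, -b, b, b, -b] q
          + MvPolynomial.eval ![-a, -b, b, -b, -b, b] q
          + MvPolynomial.eval ![a, b, b, -b, -b, b] q
          + MvPolynomial.eval ![-a, -b, -b, b, b, -b] q
          + MvPolynomial.eval ![a, b, b, -b, b, -b] q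
          + MvPolynomial.eval ![-a, -b, -b, b, -b, b] q
          + MvPolynomial.eval ![a, b, b, b, -b, -b] q
          + MvPolynomial.eval ![-a, -b, -b, -b, b, b] q
          + MvPolynomial.eval ![a, -b, -b, -b, -b, b] q
          + MvPolynomial.eval ![-a, b, b, b, b, -b] q
          + MvPolynomial.eval ![a, -b, -b, -b, b, -b] q
          + MvPolynomial.eval ![-a, b, b, b, -b, b] q
          + MvPolynomial.eval ![a, -b, -b, b, -b, -b] q
          + MvPolynomial.eval ![-a, b, b, -b, b, b] q
          + MvPolynomial.eval ![a, -b, b, -b, -b, -b] q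
          + MvPolynomial.eval ![-a, b, -b, b, b, b] q
          + MvPolynomial.eval ![a, b, -b, -b, -b, -b] q
          + MvPolynomial.eval ![-a, -b, b, b, b, b] q)
        + W2 * (MvPolynomial.eval ![h, -e, e, e, e, e] q
          + MvPolynomial.eval ![-h, e, -e, -e, -e, -e] q
          + MvPolynomial.eval ![h, e, -e, e, e, e] q
          + MvPolynomial.eval ![-h, -e, e, -e, -e, -e] q
          + MvPolynomial.eval ![h, e, e, -e, e, e] q
          + MvPolynomial.eval ![-h, -e, -e, e, -e, -e] q
          + MvPolynomial.eval ![h, e, e, e, -e, e] q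
          + MvPolynomial.eval ![-h, -e, -e, -e, e, -e] q
          + MvPolynomial.eval ![h, e, e, e, e, -e] q
          + MvPolynomial.eval ![-h, -e, -e, -e, -e, e] q
          + MvPolynomial.eval ![h, -e, -e, -e, e, e] q
          + MvPolynomial.eval ![-h, e, e, e, -e, -e] q
          + MvPolynomial.eval ![h, -e, -e, e, -e, e] q
          + MvPolynomial.eval ![-h, e, e, -e, e, -e] q
          + MvPolynomial.eval ![h, -e, -e, e, e, -e] q
          + MvPolynomial.eval ![-h, e, e, -e, -e, e] q
          + MvPolynomial.eval ![h, -e, e, -e, -e, e] q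
          + MvPolynomial.eval ![-h, e, -e, e, e, -e] q
          + MvPolynomial.eval ![h, -e, e, -e, e, -e] q
          + MvPolynomial.eval ![-h, e, -e, e, -e, e] q
          + MvPolynomial.eval ![h, -e, e, e, -e, -e] q
          + MvPolynomial.eval ![-h, e, -e, -e, e, e] q
          + MvPolynomial.eval ![h, e, -e, -e, -e, e] q
          + MvPolynomial.eval ![-h, -e, e, e, e, -e] q
          + MvPolynomial.eval ![h, e, -e, -e, e, -e] q
          + MvPolynomial.eval ![-h, -e, e, e, -e, e] q
          + MvPolynomial.eval ![h, e, -e, e, -e, -e] q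
          + MvPolynomial.eval ![-h, -e, e, -e, e, e] q
          + MvPolynomial.eval ![h, e, e, -e, -e, -e] q
          + MvPolynomial.eval ![-h, -e, -e, e, e, e] q
          + MvPolynomial.eval ![h, -e, -e, -e, -e, -e] q
          + MvPolynomial.eval ![-h, e, e, e, e, e] q
          + MvPolynomial.eval ![0, i, i, 0, 0, 0] q
          + MvPolynomial.eval ![0, i, -i, 0, 0, 0] q
          + MvPolynomial.eval ![0, -i, i, 0, 0, 0] q
          + MvPolynomial.eval ![0, -i, -i, 0, 0, 0] q
          + MvPolynomial.eval ![0, i, 0, i, 0, 0] q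
          + MvPolynomial.eval ![0, i, 0, -i, 0, 0] q
          + MvPolynomial.eval ![0, -i, 0, i, 0, 0] q
          + MvPolynomial.eval ![0, -i, 0, -i, 0, 0] q
          + MvPolynomial.eval ![0, i, 0, 0, i, 0] q
          + MvPolynomial.eval ![0, i, 0, 0, -i, 0] q
          + MvPolynomial.eval ![0, -i, 0, 0, i, 0] q
          + MvPolynomial.eval ![0, -i, 0, 0, -i, 0] q
          + MvPolynomial.eval ![0, i, 0, 0, 0, i] q
          + MvPolynomial.eval ![0, i, 0, 0, 0, -i] q
          + MvPolynomial.eval ![0, -i, 0, 0, 0, i] q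
          + MvPolynomial.eval ![0, -i, 0, 0, 0, -i] q
          + MvPolynomial.eval ![0, 0, i, i, 0, 0] q
          + MvPolynomial.eval ![0, 0, i, -i, 0, 0] q
          + MvPolynomial.eval ![0, 0, -i, i, 0, 0] q
          + MvPolynomial.eval ![0, 0, -i, -i, 0, 0] q
          + MvPolynomial.eval ![0, 0, i, 0, i, 0] q
          + MvPolynomial.eval ![0, 0, i, 0, -i, 0] q
          + MvPolynomial.eval ![0, 0, -i, 0, i, 0] q
          + MvPolynomial.eval ![0, 0, -i, 0, -i, 0] q
          + MvPolynomial.eval ![0, 0, i, 0, 0, i] q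
          + MvPolynomial.eval ![0, 0, i, 0, 0, -i] q
          + MvPolynomial.eval ![0, 0, -i, 0, 0, i] q
          + MvPolynomial.eval ![0, 0, -i, 0, 0, -i] q
          + MvPolynomial.eval ![0, 0, 0, i, i, 0] q
          + MvPolynomial.eval ![0, 0, 0, i, -i, 0] q
          + MvPolynomial.eval ![0, 0, 0, -i, i, 0] q
          + MvPolynomial.eval ![0, 0, 0, -i, -i, 0] q
          + MvPolynomial.eval ![0, 0, 0, i, 0, i] q
          + MvPolynomial.eval ![0, 0, 0, i, 0, -i] q
          + MvPolynomial.eval ![0, 0, 0, -i, 0, i] q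
          + MvPolynomial.eval ![0, 0, 0, -i, 0, -i] q
          + MvPolynomial.eval ![0, 0, 0, 0, i, i] q
          + MvPolynomial.eval ![0, 0, 0, 0, i, -i] q
          + MvPolynomial.eval ![0, 0, 0, 0, -i, i] q
          + MvPolynomial.eval ![0, 0, 0, 0, -i, -i] q)
        = ∫ x in {y : Fin 6 → ℝ | ∑ t, y t ^ 2 ≤ 1}, MvPolynomial.eval x q := by
  -- All node coordinates are integer multiples of `√(1/24)` or `√(1/8)`.
  have sqrt_scale : ∀ (k : ℝ) (x y : ℝ), 0 ≤ k → x = y * k ^ 2 → √x = √y * k := by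
    intro k x y hk hxy
    rw [hxy, Real.sqrt_mul' _ (sq_nonneg k), Real.sqrt_sq hk]
  obtain ⟨s, hs⟩ : ∃ s, s = √(1 / 24 : ℝ) := ⟨_, rfl⟩
  obtain ⟨r, hr⟩ : ∃ r, r = √(1 / 8 : ℝ) := ⟨_, rfl⟩
  have hs2 : s ^ 2 = 1 / 24 := by rw [hs, Real.sq_sqrt (by norm_num)]
  have hr2 : r ^ 2 = 1 / 8 := by rw [hr, Real.sq_sqrt (by norm_num)]
  rw [sqrt_scale 4 _ (1 / 24) (by norm_num) (by norm_num), ← hs] at hg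
  rw [sqrt_scale 2 _ (1 / 24) (by norm_num) (by norm_num), ← hs] at hc
  rw [sqrt_scale 3 _ (1 / 24) (by norm_num) (by norm_num), ← hs] at hh
  rw [sqrt_scale 2 _ (1 / 8) (by norm_num) (by norm_num), ← hr] at hf hi
  rw [← hs] at ha
  rw [← hr] at hb he
  intro q hq
  rw [← rule_eq_integral s r hs2 hr2 q hq, rule_apply]
  have h0 : (0 : Fin 6 → ℝ) = ![0, 0, 0, 0, 0, 0] := by ext j; fin_cases j <;> rfl
  simp only [h0, halfNodes, pt, List.flatMap_cons, List.flatMap_nil, List.map_cons, List.map_nil,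
    List.sum_cons, List.sum_nil, List.cons_append, List.nil_append, List.append_nil,
    Prod.fst_neg, Prod.snd_neg, mul_one, one_mul, mul_neg, neg_neg, neg_zero, Int.cast_neg,
    Int.cast_one, Int.cast_zero, Int.cast_ofNat, mul_zero]
  subst hg hc hh hf hi ha hb he hW0 hW1 hW2
  ring
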